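/- arXiv:1804.01898 — 2 statements merged into one kernel-verified Lean document; each statement's English description precedes it below -/
import Mathlib

section
/- Fix an integer s ≥ 2. Define r : ℤ → ℚ by r(n) = 1/n! for n ≥ 0 and r(n) = 0 for n < 0. Let (i₁,…,i_{2s+1}) be given by i_j = 1 for 1 ≤ j ≤ 2s and i_{2s+1} = 0. Then the determinant of the (2s+1)×(2s+1) matrix with (j,ℓ)-entry r(s − 1 + i_j − j + ℓ) equals s(2s+1)·∏_{k=0}^{2s} k!/(s+k)!. -/
/-- `r(n) = 1/n!` for `n ≥ 0` and `r(n) = 0` for `n < 0`. -/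
def rfact (n : ℤ) : ℚ := if 0 ≤ n then 1 / (Nat.factorial n.toNat : ℚ) else 0

/-!
With `1/n!` extended by zero to negative `n`, the recurrence `r(z - 1) = z r(z)` holds for every
integer `z`, so `r(z - m) = z (z - 1) ⋯ (z - m + 1) r(z)` is `r(z)` times a monic polynomial of
degree `m` in `z`. Hence `det (r(L i - m)) = ∏ r(L i) · ∏_{i < j} (L j - L i)` for all integers
`L i`. Once the order of rows and of columns is reversed, the matrix of the theorem has this form
with `L = (s - 1, s + 1, s + 2, …, s + n)`, where `n = 2s`. The differences from the first node
multiply to `(n + 1)!`, those among the consecutive nodes to `∏_{k < n} k!`, and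
`r(s - 1) = s r(s)` closes the gap in `∏ r(L i)`.
-/

section ReciprocalFactorial

lemma rfact_natCast (n : ℕ) : rfact n = 1 / (n.factorial : ℚ) := by
  simp [rfact]

lemma rfact_of_neg {z : ℤ} (hz : z < 0) : rfact z = 0 :=
  if_neg hz.not_ge

lemma rfact_sub_one (z : ℤ) : rfact (z - 1) = z * rfact z := by
  rcases lt_trichotomy z 0 with hneg | rfl | hpos
  · rw [rfact_of_neg hneg, rfact_of_neg (by lia), mul_zero]
  · rw [rfact_of_neg (by lia), Int.cast_zero, zero_mul]
  · obtain ⟨n, rfl⟩ : ∃ n : ℕ, z = (n + 1 : ℕ) := ⟨z.toNat - 1, by lia⟩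
    have hpred : ((n + 1 : ℕ) : ℤ) - 1 = n := by lia
    rw [hpred, rfact_natCast, rfact_natCast, Nat.factorial_succ]
    push_cast
    field_simp

lemma rfact_sub_natCast (z : ℤ) (m : ℕ) :
    rfact (z - m) = rfact z * ((descPochhammer ℤ m).eval z : ℤ) := by
  induction m with
  | zero => simp
  | succ m ih =>
    have hstep : z - (m + 1 : ℕ) = z - m - 1 := by lia
    rw [hstep, rfact_sub_one, ih, descPochhammer_succ_eval]
    push_cast
    ring

theorem det_rfact_sub {n : ℕ} (L : Fin n → ℤ) :
    (Matrix.of fun i m : Fin n => rfact (L i - (m : ℕ))).det =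
      (∏ i, rfact (L i)) * ((Matrix.vandermonde L).det : ℤ) := by
  rw [Matrix.det_eval_matrixOfPolynomials_eq_det_vandermonde L
      (fun m => descPochhammer ℤ m) (fun m => descPochhammer_natDegree ℤ m)
      (fun m => monic_descPochhammer ℤ m),
    Int.cast_det, ← Matrix.det_mul_column]
  simp only [rfact_sub_natCast, Matrix.map_apply, Matrix.of_apply]

end ReciprocalFactorial

section Vandermonde

variable {R : Type*} [CommRing R]

lemma det_vandermonde_fin_cons {n : ℕ} (a : R) (v : Fin n → R) :
    (Matrix.vandermonde (Fin.cons a v : Fin (n + 1) → R)).det =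
      (∏ i, (v i - a)) * (Matrix.vandermonde v).det := by
  simp only [Matrix.det_vandermonde, Fin.prod_univ_succ, Fin.prod_Ioi_zero, Fin.prod_Ioi_succ,
    Fin.cons_zero, Fin.cons_succ]

lemma det_vandermonde_consecutive (a : R) (n : ℕ) :
    (Matrix.vandermonde fun i : Fin n => a + (i : ℕ)).det =
      ∏ k ∈ Finset.range n, (k.factorial : R) := by
  simp only [add_comm a]
  rw [Matrix.det_vandermonde_add (fun i : Fin n => ((i : ℕ) : R))]
  cases n with
  | zero => simp
  | succ n =>
    rw [Matrix.det_vandermonde_id_eq_superFactorial, ← Nat.prod_range_factorial_succ,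
      Finset.prod_range_succ', Nat.cast_prod, Nat.factorial_zero, Nat.cast_one, mul_one]

/-- The nodes `a - 1, a + 1, a + 2, …, a + n`: a run of consecutive elements in which only `a` is
left out. For `a = s` they are the arguments of `rfact` in the first column of the theorem's
matrix, after rows and columns have been reversed. -/
def gapNode (a : R) (n : ℕ) : Fin (n + 1) → R :=
  Fin.cons (a - 1) fun i : Fin n => a + 1 + (i : ℕ)

lemma prod_fin_add_two (n : ℕ) : ∏ i : Fin n, (((i : ℕ) : R) + 2) = ((n + 1).factorial : R) := by
  rw [Fin.prod_univ_eq_prod_range (fun i => (i : R) + 2), ← Finset.prod_range_add_one_eq_factorial,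
    Finset.prod_range_succ']
  push_cast
  simp only [mul_one, add_assoc, one_add_one_eq_two]

theorem det_vandermonde_gapNode (a : R) (n : ℕ) :
    (Matrix.vandermonde (gapNode a n)).det =
      (n + 1) * ∏ k ∈ Finset.range (n + 1), (k.factorial : R) := by
  have hdiff (i : Fin n) : a + 1 + (i : ℕ) - (a - 1) = ((i : ℕ) : R) + 2 := by ring
  rw [gapNode, det_vandermonde_fin_cons, det_vandermonde_consecutive]
  simp only [hdiff]
  rw [prod_fin_add_two, Finset.prod_range_succ, Nat.factorial_succ]
  push_cast
  ring

end Vandermonde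

lemma prod_rfact_gapNode (s n : ℕ) :
    ∏ i, rfact (gapNode (s : ℤ) n i) =
      s * ∏ k ∈ Finset.range (n + 1), 1 / ((s + k).factorial : ℚ) := by
  have htail (i : Fin n) : rfact ((s : ℤ) + 1 + (i : ℕ)) = 1 / ((s + (i + 1)).factorial : ℚ) := by
    rw [← rfact_natCast]
    congr 1
    lia
  rw [Fin.prod_univ_succ, Finset.prod_range_succ']
  simp only [gapNode, Fin.cons_zero, Fin.cons_succ, htail]
  rw [rfact_sub_one, rfact_natCast,
    Fin.prod_univ_eq_prod_range (fun i => 1 / ((s + (i + 1)).factorial : ℚ)), add_zero,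
    Int.cast_natCast]
  ring

lemma rfact_submatrix_rev (s n : ℕ) :
    (Matrix.of fun j ℓ : Fin (n + 1) =>
        rfact ((s : ℤ) - 1 + (if (j : ℕ) < n then 1 else 0) + (ℓ : ℕ) - (j : ℕ))).submatrix
          Fin.revPerm Fin.revPerm =
      Matrix.of fun i m : Fin (n + 1) => rfact (gapNode (s : ℤ) n i - (m : ℕ)) := by
  ext i m
  simp only [Matrix.submatrix_apply, Matrix.of_apply, Fin.revPerm_apply, Fin.val_rev]
  congr 1
  have hm : (m : ℕ) ≤ n := m.is_le
  cases i using Fin.cases with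
  | zero =>
    simp only [gapNode, Fin.cons_zero, Fin.val_zero]
    split_ifs <;> omega
  | succ i =>
    simp only [gapNode, Fin.cons_succ, Fin.val_succ]
    split_ifs <;> omega

theorem harris_tu_determinant_theta_general (s n : ℕ) :
    Matrix.det (Matrix.of fun j ℓ : Fin (n + 1) =>
        rfact ((s : ℤ) - 1 + (if (j : ℕ) < n then 1 else 0) + (ℓ : ℕ) - (j : ℕ))) =
      (s : ℚ) * ((n : ℚ) + 1) *
        ∏ k ∈ Finset.range (n + 1), (Nat.factorial k : ℚ) / (Nat.factorial (s + k) : ℚ) := by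
  rw [← Matrix.det_submatrix_equiv_self Fin.revPerm, rfact_submatrix_rev, det_rfact_sub,
    prod_rfact_gapNode, det_vandermonde_gapNode]
  push_cast
  simp only [div_eq_mul_inv, Finset.prod_mul_distrib, one_mul]
  ring

/-- For `i_j = 1` for `1 ≤ j ≤ 2s` and `i_{2s+1} = 0`, the determinant of the
`(2s+1)×(2s+1)` matrix with `(j,ℓ)`-entry `r(s − 1 + i_j − j + ℓ)` equals
`s(2s+1)·∏_{k=0}^{2s} k!/(s+k)!`. -/
theorem harris_tu_determinant_theta (s : ℕ) (hs : 2 ≤ s) :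
    Matrix.det (Matrix.of fun j ℓ : Fin (2*s + 1) =>
        rfact ((s : ℤ) - 1 + (if (j : ℕ) < 2*s then 1 else 0) + (ℓ : ℕ) - (j : ℕ))) =
      (s : ℚ) * (2*(s : ℚ) + 1) *
        ∏ k ∈ Finset.range (2*s + 1),
          (Nat.factorial k : ℚ) / (Nat.factorial (s + k) : ℚ) := by
  exact_mod_cast harris_tu_determinant_theta_general s (2 * s)
end

section
/- Fix an integer s ≥ 2. Define r : ℤ → ℚ by r(n) = 1/n! for n ≥ 0 and r(n) = 0 for n < 0. Let (i₁,…,i_{2s+1}) be given by i₁ = 3, i_j = 1 for 2 ≤ j ≤ 2s−1, and i_{2s} = i_{2s+1} = 0. Then the determinant of the (2s+1)×(2s+1) matrix with (j,ℓ)-entry r(s − 1 + i_j − j + ℓ) equals (s²(s+1)²(2s−1)(2s+3)/((3s+1)(3s+2)))·∏_{k=0}^{2s} k!/(s+k)!. -/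
/-!
For a matrix of size `n`, reversing rows and columns makes the entries `1 / (m j - ℓ)!`, with
increasing nodes `m = (s - 1, s, s + 2, s + 3, …, s + n - 2, s + n + 1)`. Since
`1 / (m - ℓ)! = m (m - 1) ⋯ (m - ℓ + 1) / m!`, pulling `1 / (m j)!` out of each row leaves monic
polynomials of degrees `0, …, n - 1` evaluated at the nodes, so the determinant is
`∏ i < j, (m j - m i) / ∏ j, (m j)!`. The contribution of node `j` to this quotient is a rational
multiple of `j! / (s + j)!`; for `2 ≤ j < n - 1` the multiple is `(j + 1) / (j - 1)`, whose product
telescopes.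
-/

open Finset Matrix
open scoped Nat

theorem factorial_mul_descFactorial_add (d l : ℕ) :
    d ! * (d + l).descFactorial l = (d + l)! := by
  rw [Nat.add_descFactorial_eq_ascFactorial, Nat.factorial_mul_ascFactorial]

theorem rfact_natCast_sub (m l : ℕ) :
    rfact ((m : ℤ) - l) = (m ! : ℚ)⁻¹ * (descPochhammer ℚ l).eval (m : ℚ) := by
  rw [descPochhammer_eval_eq_descFactorial]
  rcases lt_or_ge m l with hml | hlm
  · rw [Nat.descFactorial_eq_zero_iff_lt.mpr hml, rfact, if_neg (by omega)]
    simp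
  · obtain ⟨d, rfl⟩ := Nat.exists_eq_add_of_le' hlm
    have hfact : (d ! * (d + l).descFactorial l : ℚ) = (d + l)! := by
      exact_mod_cast factorial_mul_descFactorial_add d l
    rw [rfact, if_pos (by omega), show ((d + l : ℕ) - l : ℤ).toNat = d by omega]
    field_simp
    exact hfact.symm

theorem det_vandermonde_eq_prod_range {R : Type*} [CommRing R] (n : ℕ) (v : ℕ → R) :
    (vandermonde fun i : Fin n ↦ v i).det = ∏ j ∈ range n, ∏ i ∈ range j, (v j - v i) := by
  rw [det_vandermonde, prod_comm' (t' := univ) (s' := fun j ↦ Iio j) (by simp),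
    ← Fin.prod_univ_eq_prod_range]
  refine prod_congr rfl fun j _ ↦ ?_
  rw [← Nat.Iio_eq_range, ← Fin.map_valEmbedding_Iio, prod_map]
  rfl

/-- The contribution of the node `m j` to the value `∏ i < j, (m j - m i) / ∏ j, (m j)!` of the
determinant of `1 / (m j - ℓ)!`. -/
def nodeFactor (m : ℕ → ℕ) (j : ℕ) : ℚ := (∏ i ∈ range j, ((m j : ℚ) - m i)) / (m j)!

theorem det_rfact_sub_s12 (n : ℕ) (m : ℕ → ℕ) :
    (of fun j l : Fin n ↦ rfact ((m j : ℤ) - (l : ℕ))).det = ∏ j ∈ range n, nodeFactor m j := by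
  have hdet : (of fun j l : Fin n ↦ (descPochhammer ℚ l).eval (m j : ℚ)).det =
      ∏ j ∈ range n, ∏ i ∈ range j, ((m j : ℚ) - m i) := by
    rw [← det_vandermonde_eq_prod_range n fun j ↦ (m j : ℚ)]
    exact (det_eval_matrixOfPolynomials_eq_det_vandermonde _ _
      (fun l ↦ descPochhammer_natDegree ℚ l) fun l ↦ monic_descPochhammer ℚ l).symm
  simp only [rfact_natCast_sub, nodeFactor, prod_div_distrib]
  rw [← hdet, div_eq_inv_mul, ← prod_inv_distrib, ← Fin.prod_univ_eq_prod_range, ← det_mul_column]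
  rfl

/-- The nodes `a, a + 1, a + 3, a + 4, …, a + k + 2, a + k + 5` of the reversed matrix: the shift
of `a + j` is the exponent `i` of the row in question, read from the bottom row up. -/
def cubeNode (a k j : ℕ) : ℕ := a + j + if j < 2 then 0 else if j < k + 2 then 1 else 3

theorem prod_sub_cubeNode (a : ℕ) {j k : ℕ} (hjk : j ≤ k) (x : ℚ) :
    ∏ i ∈ range (j + 2), (x - cubeNode a k i) =
      (x - a) * (x - (a + 1)) * (descPochhammer ℚ j).eval (x - (a + 3)) := by
  have hconsecutive : ∀ i ∈ range j, x - cubeNode a k (i + 1 + 1) = x - (a + 3) - i := by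
    intro i hi
    rw [cubeNode, if_neg (by omega), if_pos (by grind)]
    push_cast
    ring
  rw [prod_range_succ', prod_range_succ', prod_congr rfl hconsecutive,
    ← descPochhammer_eval_eq_prod_range]
  simp only [cubeNode]
  push_cast
  ring

theorem nodeFactor_cubeNode_zero (a k : ℕ) :
    nodeFactor (cubeNode a k) 0 = (a + 1) * (0 ! / (a + 1 + 0)!) := by
  have hnode : cubeNode a k 0 = a := rfl
  rw [nodeFactor, hnode, prod_range_zero, add_zero, Nat.factorial_succ, Nat.factorial_zero]
  push_cast
  field_simp

theorem nodeFactor_cubeNode_one (a k : ℕ) :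
    nodeFactor (cubeNode a k) 1 = (a + 2) * (1 ! / (a + 1 + 1)!) := by
  have hnode_zero : cubeNode a k 0 = a := rfl
  have hnode_one : cubeNode a k 1 = a + 1 := rfl
  rw [nodeFactor, prod_range_one, hnode_zero, hnode_one, Nat.factorial_succ (a + 1),
    Nat.factorial_one]
  push_cast
  field_simp
  ring

theorem nodeFactor_cubeNode_add_two (a : ℕ) {j k : ℕ} (hjk : j < k) :
    nodeFactor (cubeNode a k) (j + 2) =
      (j + 3) / (j + 1) * ((j + 2)! / (a + 1 + (j + 2))!) := by
  have hnode : cubeNode a k (j + 2) = a + 1 + (j + 2) := by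
    rw [cubeNode, if_neg (by omega), if_pos (by omega)]
    ring
  have hsub : ((a + 1 + (j + 2) : ℕ) : ℚ) - (a + 3) = j := by push_cast; ring
  rw [nodeFactor, prod_sub_cubeNode a hjk.le, hnode, hsub, descPochhammer_eval_eq_descFactorial,
    Nat.descFactorial_self]
  simp only [Nat.factorial_succ j, Nat.factorial_succ (j + 1)]
  push_cast
  field_simp
  ring

theorem nodeFactor_cubeNode_last (a k : ℕ) :
    nodeFactor (cubeNode a k) (k + 2) =
      (k + 4) * (k + 5) / (2 * (a + k + 4) * (a + k + 5)) *
        ((k + 2)! / (a + 1 + (k + 2))!) := by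
  have hnode : cubeNode a k (k + 2) = a + 1 + (k + 2) + 1 + 1 := by
    rw [cubeNode, if_neg (by omega), if_neg (by omega)]
    ring
  have hsub : ((a + 1 + (k + 2) + 1 + 1 : ℕ) : ℚ) - (a + 3) = (k + 2 : ℕ) := by push_cast; ring
  have hdesc : (2 * (k + 2).descFactorial k : ℚ) = (k + 2)! := by
    exact_mod_cast add_comm 2 k ▸ factorial_mul_descFactorial_add 2 k
  rw [nodeFactor, prod_sub_cubeNode a le_rfl, hnode, hsub, descPochhammer_eval_eq_descFactorial,
    ← hdesc, Nat.factorial_succ (a + 1 + (k + 2) + 1), Nat.factorial_succ (a + 1 + (k + 2))]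
  push_cast
  field_simp
  ring

theorem prod_range_add_three_div_add_one (k : ℕ) :
    ∏ j ∈ range k, ((j + 3) / (j + 1) : ℚ) = (k + 1) * (k + 2) / 2 := by
  induction k with
  | zero => norm_num
  | succ k ih =>
    rw [prod_range_succ, ih]
    push_cast
    field_simp
    ring

theorem prod_nodeFactor_cubeNode (a k : ℕ) :
    ∏ j ∈ range (k + 3), nodeFactor (cubeNode a k) j =
      (a + 1) * (a + 2) * (k + 1) * (k + 2) * (k + 4) * (k + 5) /
          (4 * (a + k + 4) * (a + k + 5)) *
        ∏ j ∈ range (k + 3), (j ! / (a + 1 + j)! : ℚ) := by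
  have hconsecutive : ∏ j ∈ range k, nodeFactor (cubeNode a k) (j + 2) =
      (k + 1) * (k + 2) / 2 * ∏ j ∈ range k, ((j + 2)! / (a + 1 + (j + 2))! : ℚ) := by
    rw [← prod_range_add_three_div_add_one, ← prod_mul_distrib]
    exact prod_congr rfl fun j hj ↦ nodeFactor_cubeNode_add_two a (mem_range.mp hj)
  simp only [prod_range_succ _ (k + 2), prod_range_succ' _ (k + 1), prod_range_succ' _ k]
  rw [hconsecutive, nodeFactor_cubeNode_zero, nodeFactor_cubeNode_one, nodeFactor_cubeNode_last]
  field_simp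
  ring

theorem rfact_matrix_submatrix_rev (a k : ℕ) :
    (of fun j ℓ : Fin (k + 3) ↦
        rfact (((a + 1 : ℕ) : ℤ) - 1 +
          (if (j : ℕ) = 0 then 3 else if (j : ℕ) < k + 3 - 2 then 1 else 0) +
          (ℓ : ℕ) - (j : ℕ))).submatrix Fin.revPerm Fin.revPerm =
      of fun j l : Fin (k + 3) ↦ rfact ((cubeNode a k j : ℤ) - (l : ℕ)) := by
  ext j l
  simp only [submatrix_apply, of_apply, Fin.revPerm_apply, Fin.val_rev]
  congr 1
  grind [cubeNode]

theorem harris_tu_determinant_cube_general {s n : ℕ} (hs : 1 ≤ s) (hn : 3 ≤ n) :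
    det (of fun j ℓ : Fin n ↦
        rfact ((s : ℤ) - 1 +
          (if (j : ℕ) = 0 then 3 else if (j : ℕ) < n - 2 then 1 else 0) +
          (ℓ : ℕ) - (j : ℕ))) =
      (s : ℚ) * (s + 1) * (n - 2) * (n - 1) * (n + 1) * (n + 2) /
          (4 * (s + n) * (s + n + 1)) *
        ∏ k ∈ range n, (k ! / (s + k)! : ℚ) := by
  obtain ⟨a, rfl⟩ := Nat.exists_eq_add_of_le' hs
  obtain ⟨k, rfl⟩ := Nat.exists_eq_add_of_le' hn
  rw [← det_submatrix_equiv_self Fin.revPerm, rfact_matrix_submatrix_rev, det_rfact_sub_s12,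
    prod_nodeFactor_cubeNode]
  push_cast
  ring

/-- For `i₁ = 3`, `i_j = 1` for `2 ≤ j ≤ 2s−1` and `i_{2s} = i_{2s+1} = 0`, the
determinant of the `(2s+1)×(2s+1)` matrix with `(j,ℓ)`-entry `r(s − 1 + i_j − j + ℓ)`
equals `(s²(s+1)²(2s−1)(2s+3)/((3s+1)(3s+2)))·∏_{k=0}^{2s} k!/(s+k)!`. -/
theorem harris_tu_determinant_cube (s : ℕ) (hs : 2 ≤ s) :
    Matrix.det (Matrix.of fun j ℓ : Fin (2*s + 1) =>
        rfact ((s : ℤ) - 1 +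
          (if (j : ℕ) = 0 then 3 else if (j : ℕ) < 2*s - 1 then 1 else 0) +
          (ℓ : ℕ) - (j : ℕ))) =
      (s : ℚ)^2 * ((s : ℚ) + 1)^2 * (2*(s : ℚ) - 1) * (2*(s : ℚ) + 3) /
          ((3*(s : ℚ) + 1) * (3*(s : ℚ) + 2)) *
        ∏ k ∈ Finset.range (2*s + 1),
          (Nat.factorial k : ℚ) / (Nat.factorial (s + k) : ℚ) := by
  refine (harris_tu_determinant_cube_general (by omega) (by omega)).trans ?_
  congr 1
  push_cast
  field_simp
  ring
end
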